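/- Let H be a graph whose first gonality equals the number of its vertices, i.e. gon_1(H) = |V(H)|, and fix a vertex v of H. Let E be an effective divisor on H with E(w) ≤ 1 for every vertex w ≠ v. Then E is v-reduced. -/

import Mathlib

open Finset

variable {V : Type*} [Fintype V] [DecidableEq V]

/-- A finite loopless multigraph on vertex type `V`, given by symmetric edge multiplicities. -/
structure Multigraph (V : Type*) [Fintype V] [DecidableEq V] where
  mult : V → V → ℕ
  symm : ∀ u v, mult u v = mult v u
  loopless : ∀ v, mult v v = 0

namespace Multigraph

def Adj (G : Multigraph V) (u v : V) : Prop := 0 < G.mult u v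

/-- A graph is connected. -/
def Connected (G : Multigraph V) : Prop :=
  Nonempty V ∧ ∀ u v : V, Relation.ReflTransGen G.Adj u v

/-- Valence of a vertex. -/
def valence (G : Multigraph V) (v : V) : ℕ := ∑ u, G.mult v u

/-- The Laplacian applied to an integer-valued function on the vertices. -/
def laplacian (G : Multigraph V) (f : V → ℤ) : V → ℤ :=
  fun w => ∑ u, (G.mult w u : ℤ) * (f w - f u)

/-- Degree of a divisor. -/
def degree (D : V → ℤ) : ℤ := ∑ v, D v

/-- A divisor is effective if all coefficients are nonnegative. -/
def Effective (D : V → ℤ) : Prop := ∀ v, 0 ≤ D v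

/-- Linear equivalence of divisors: they differ by a sequence of chip-firing moves,
equivalently by a Laplacian of an integer function. -/
def LinEquiv (G : Multigraph V) (D D' : V → ℤ) : Prop :=
  ∃ f : V → ℤ, D' = D - G.laplacian f

/-- A divisor is winnable if it is linearly equivalent to an effective divisor. -/
def Winnable (G : Multigraph V) (D : V → ℤ) : Prop :=
  ∃ E : V → ℤ, Effective E ∧ G.LinEquiv D E

/-- The Baker–Norine rank of a divisor: the largest `r` such that `D - E` is winnable for
every effective divisor `E` of degree `r` (the defining set contains all negative integers,
and its supremum is `-1` precisely when `D` itself is not winnable). -/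
noncomputable def rank (G : Multigraph V) (D : V → ℤ) : ℤ :=
  sSup {r : ℤ | ∀ E : V → ℤ, Effective E → degree E = r → G.Winnable (fun w => D w - E w)}

/-- The `k`-th gonality of a graph: the smallest degree of a divisor of rank `k`. -/
noncomputable def gonality (G : Multigraph V) (k : ℤ) : ℤ :=
  sInf {d : ℤ | ∃ D : V → ℤ, G.rank D = k ∧ degree D = d}

/-- A graph is gonality-tight if its second gonality exceeds its first by exactly 1. -/
def GonalityTight (G : Multigraph V) : Prop :=
  G.gonality 2 = G.gonality 1 + 1

/-- A divisor realises the `k`-th gonality if it has rank `k` and degree `gon_k(G)`. -/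
def Realises (G : Multigraph V) (k : ℤ) (D : V → ℤ) : Prop :=
  G.rank D = k ∧ degree D = G.gonality k

/-- A divisor is `v`-reduced: nonnegative away from `v`, and set-firing any nonempty set of
vertices not containing `v` creates a negative coefficient inside the set. -/
def Reduced (G : Multigraph V) (v : V) (D : V → ℤ) : Prop :=
  (∀ w, w ≠ v → 0 ≤ D w) ∧
    ∀ U : Finset V, U.Nonempty → v ∉ U →
      ∃ w ∈ U, D w - ∑ u ∈ Uᶜ, (G.mult w u : ℤ) < 0

/-- The genus (first Betti number) of a graph: `|E| - |V| + 1`. -/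
def genus (G : Multigraph V) : ℤ :=
  ((∑ u, ∑ v, G.mult u v : ℕ) : ℤ) / 2 - Fintype.card V + 1

/-- The canonical divisor of a graph. -/
def canonical (G : Multigraph V) : V → ℤ :=
  fun w => (G.valence w : ℤ) - 2

/-- The subgraph induced on a set `S` of vertices (with all edges among `S`). -/
def induce (G : Multigraph V) (S : Finset V) : Multigraph {x // x ∈ S} where
  mult a b := G.mult a b
  symm a b := G.symm a b
  loopless a := G.loopless a

/-- `G.SeparatedBy u w v` means every path from `w` to `v` passes through `u`. -/
def SeparatedBy (G : Multigraph V) (u w v : V) : Prop :=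
  ¬ Relation.ReflTransGen (fun x y => G.Adj x y ∧ x ≠ u ∧ y ≠ u) w v

end Multigraph

/-- Size of the `i`-th level of a quasi-banana graph: level `0` has a single vertex. -/
def qbSize (q : ℕ → ℕ) (i : ℕ) : ℕ := if i = 0 then 1 else q i

/-- `ℓ` is a quasi-banana labelling of `G` exhibiting `G ≅ QB_m(q_1, …, q_m)`:
`ℓ` is a bijection onto the pairs `(i, j)` with `i ≤ m`, `1 ≤ j ≤ qbSize q i`
(vertex `u_{i,j}` is the vertex labelled `(i,j)`), and the edge multiplicities are:
one edge between distinct vertices of the same level, `(∑_{k=1}^{i} q_k) + 2` edges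
between `u_{i,1}` and each `u_{i+1,j}`, and no other edges. -/
def Multigraph.IsQBLabelling (G : Multigraph V) (m : ℕ) (q : ℕ → ℕ) (ℓ : V → ℕ × ℕ) : Prop :=
  (∀ i, 1 ≤ i → i ≤ m → 0 < q i) ∧
  Function.Injective ℓ ∧
  (∀ v : V, (ℓ v).1 ≤ m ∧ 1 ≤ (ℓ v).2 ∧ (ℓ v).2 ≤ qbSize q (ℓ v).1) ∧
  (∀ i j : ℕ, i ≤ m → 1 ≤ j → j ≤ qbSize q i → ∃ v, ℓ v = (i, j)) ∧
  (∀ v w : V, v ≠ w → G.mult v w =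
    if (ℓ v).1 = (ℓ w).1 then 1
    else if (ℓ v).1 + 1 = (ℓ w).1 ∧ (ℓ v).2 = 1 then (∑ i ∈ Finset.Icc 1 (ℓ v).1, q i) + 2
    else if (ℓ w).1 + 1 = (ℓ v).1 ∧ (ℓ w).2 = 1 then (∑ i ∈ Finset.Icc 1 (ℓ w).1, q i) + 2
    else 0)

/-- A graph is a quasi-banana graph if it is isomorphic to some `QB_m(N)`. -/
def Multigraph.IsQuasiBanana (G : Multigraph V) : Prop :=
  ∃ (m : ℕ) (q : ℕ → ℕ) (ℓ : V → ℕ × ℕ), G.IsQBLabelling m q ℓ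

/-- The graph obtained from `G'` by attaching a complete graph `K_n`: `n` new vertices
pairwise joined by exactly one edge, each joined to `v` by exactly `k+1` edges. -/
def attachComplete (G' : Multigraph V) (v : V) (k n : ℕ) : Multigraph (V ⊕ Fin n) where
  mult x y :=
    match x, y with
    | Sum.inl a, Sum.inl b => G'.mult a b
    | Sum.inl a, Sum.inr _ => if a = v then k + 1 else 0
    | Sum.inr _, Sum.inl b => if b = v then k + 1 else 0
    | Sum.inr i, Sum.inr j => if i = j then 0 else 1
  symm := by
    rintro (a | i) (b | j)
    · exact G'.symm a b
    · rfl
    · rfl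
    · by_cases h : i = j
      · simp [h]
      · simp [h, Ne.symm h]
  loopless := by
    rintro (a | i)
    · exact G'.loopless a
    · simp

/-!
If every vertex of a set `U` had at most one edge leaving `U`, take an edge from `U` to a vertex
`x ∉ U`. The divisor `1 - x` carries a chip everywhere but at `x`, and firing `U` moves a chip
onto `x` while leaving no vertex in debt. So `1 - x` has positive rank and degree `|V| - 1`,
contradicting `gon_1 = |V|`. Hence some vertex of `U` has two edges leaving `U`, and `E`, which has
at most one chip there, goes into debt when `U` is fired.
-/

namespace Multigraph

variable {D D' E F : V → ℤ}

section Degree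

omit [DecidableEq V]

lemma degree_add (D E : V → ℤ) : degree (D + E) = degree D + degree E :=
  Finset.sum_add_distrib

lemma degree_sub (D E : V → ℤ) : degree (D - E) = degree D - degree E :=
  Finset.sum_sub_distrib D E

lemma degree_one : degree (1 : V → ℤ) = Fintype.card V := by
  simp [degree]

lemma Effective.degree_nonneg (hD : Effective D) : 0 ≤ degree D :=
  Finset.sum_nonneg fun w _ => hD w

lemma Effective.eq_zero_of_degree_eq_zero (hD : Effective D) (h : degree D = 0) : D = 0 :=
  (Fintype.sum_eq_zero_iff_of_nonneg hD).1 h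

end Degree

section Effective

omit [Fintype V]

omit [DecidableEq V] in
lemma Effective.add (hD : Effective D) (hE : Effective E) : Effective (D + E) :=
  fun w => add_nonneg (hD w) (hE w)

lemma effective_single (x : V) {c : ℤ} (hc : 0 ≤ c) : Effective (Pi.single x c) :=
  (Pi.single_nonneg.2 hc : 0 ≤ (Pi.single x c : V → ℤ))

lemma Effective.sub_single {x : V} (hD : Effective D) (hx : 1 ≤ D x) :
    Effective (D - Pi.single x 1) := by
  intro w
  rcases eq_or_ne w x with rfl | hw
  · simpa using hx
  · simpa [hw] using hD w

end Effective

lemma degree_single (x : V) (c : ℤ) : degree (Pi.single x c) = c := by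
  simp [degree]

lemma Effective.exists_eq_single_of_degree_eq_one (hD : Effective D) (h : degree D = 1) :
    ∃ x, D = Pi.single x 1 := by
  have hpos : ∑ _w : V, (0 : ℤ) < ∑ w, D w := by
    rw [Finset.sum_const_zero]
    exact zero_lt_one.trans_eq h.symm
  obtain ⟨x, -, hx⟩ := Finset.exists_lt_of_sum_lt hpos
  refine ⟨x, sub_eq_zero.1 ((hD.sub_single hx).eq_zero_of_degree_eq_zero ?_)⟩
  rw [degree_sub, degree_single, h, sub_self]

variable {G : Multigraph V} {U : Finset V} {u v w x : V} {k r s : ℤ}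

lemma degree_laplacian (G : Multigraph V) (f : V → ℤ) : degree (G.laplacian f) = 0 := by
  have antisymm : degree (G.laplacian f) = -degree (G.laplacian f) := calc
    degree (G.laplacian f) = ∑ u, ∑ w, (G.mult w u : ℤ) * (f w - f u) := Finset.sum_comm
    _ = ∑ u, ∑ w, -((G.mult u w : ℤ) * (f u - f w)) := by
      refine Finset.sum_congr rfl fun u _ => Finset.sum_congr rfl fun w _ => ?_
      rw [G.symm w u]
      ring
    _ = -degree (G.laplacian f) := by
      simp only [Finset.sum_neg_distrib, degree, laplacian]
  linarith

lemma winnable_of_effective_sub_laplacian (f : V → ℤ) (h : Effective (D - G.laplacian f)) :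
    G.Winnable D :=
  ⟨_, h, f, rfl⟩

lemma Effective.winnable (hD : Effective D) : G.Winnable D := by
  refine winnable_of_effective_sub_laplacian 0 ?_
  have laplacian_zero : G.laplacian 0 = 0 := by
    ext w
    simp [laplacian]
  rwa [laplacian_zero, sub_zero]

lemma Winnable.mono (h : G.Winnable D) (hDD' : D ≤ D') : G.Winnable D' := by
  obtain ⟨_, hE, f, rfl⟩ := h
  exact winnable_of_effective_sub_laplacian f fun w =>
    (hE w).trans (sub_le_sub_right (hDD' w) _)

lemma Winnable.degree_nonneg (h : G.Winnable D) : 0 ≤ degree D := by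
  obtain ⟨_, hE, f, rfl⟩ := h
  simpa only [degree_sub, degree_laplacian, sub_zero] using hE.degree_nonneg

/-- `D` has rank at least `r`: the condition whose largest solution `r` is the Baker–Norine rank
of `D`. As for `rank`, it holds vacuously for negative `r`. -/
def HasRankAtLeast (G : Multigraph V) (D : V → ℤ) (r : ℤ) : Prop :=
  ∀ E : V → ℤ, Effective E → degree E = r → G.Winnable (D - E)

lemma hasRankAtLeast_one (h : ∀ x, G.Winnable (D - Pi.single x 1)) :
    G.HasRankAtLeast D 1 := by
  intro E hE hdeg
  obtain ⟨x, rfl⟩ := hE.exists_eq_single_of_degree_eq_one hdeg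
  exact h x

lemma hasRankAtLeast_of_neg (hr : r < 0) : G.HasRankAtLeast D r :=
  fun _ hE hdeg => absurd (hdeg ▸ hE.degree_nonneg) hr.not_ge

lemma HasRankAtLeast.sub (h : G.HasRankAtLeast D (r + degree F)) (hF : Effective F) :
    G.HasRankAtLeast (D - F) r := by
  intro E hE hdeg
  rw [sub_sub, add_comm]
  exact h _ (hE.add hF) (by rw [degree_add, hdeg])

section Nonempty

variable [Nonempty V]

lemma HasRankAtLeast.anti (h : G.HasRankAtLeast D r) (hsr : s ≤ r) :
    G.HasRankAtLeast D s := by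
  intro E hE hdeg
  obtain ⟨v⟩ := ‹Nonempty V›
  have hpad : Effective (Pi.single v (r - s)) := effective_single v (sub_nonneg.2 hsr)
  have hwin : G.Winnable (D - (E + Pi.single v (r - s))) :=
    h _ (hE.add hpad) (by rw [degree_add, degree_single, hdeg, add_sub_cancel])
  exact hwin.mono (sub_le_sub_left (le_add_of_nonneg_right hpad) D)

lemma HasRankAtLeast.le_degree (h : G.HasRankAtLeast D r) (hr : 0 ≤ r) : r ≤ degree D := by
  obtain ⟨v⟩ := ‹Nonempty V›
  have hwin := h _ (effective_single v hr) (degree_single v r)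
  simpa only [degree_sub, degree_single, sub_nonneg] using hwin.degree_nonneg

lemma le_rank_iff : r ≤ G.rank D ↔ G.HasRankAtLeast D r := by
  have hbdd : BddAbove {r | G.HasRankAtLeast D r} := by
    refine ⟨max 0 (degree D), fun r hr => ?_⟩
    rcases le_total r 0 with hr0 | hr0
    · exact le_max_of_le_left hr0
    · exact le_max_of_le_right (hr.le_degree hr0)
  have hne : {r | G.HasRankAtLeast D r}.Nonempty := ⟨-1, hasRankAtLeast_of_neg neg_one_lt_zero⟩
  exact ⟨(Int.csSup_mem hne hbdd : G.HasRankAtLeast D (G.rank D)).anti, le_csSup hbdd⟩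

lemma le_degree_of_rank_eq (hk : 0 ≤ k) (hD : G.rank D = k) : k ≤ degree D :=
  (le_rank_iff.1 hD.ge).le_degree hk

/-- Removing a chip lowers the rank by at most one, so minimality forces the rank down to `k`. -/
lemma rank_eq_of_degree_minimal (hD : G.HasRankAtLeast D k)
    (hmin : ∀ D', G.HasRankAtLeast D' k → degree D ≤ degree D') : G.rank D = k := by
  refine le_antisymm (not_lt.1 fun hlt => ?_) (le_rank_iff.2 hD)
  obtain ⟨v⟩ := ‹Nonempty V›
  have hD' : G.HasRankAtLeast (D - Pi.single v 1) k := by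
    refine HasRankAtLeast.sub ?_ (effective_single v zero_le_one)
    rw [degree_single]
    exact le_rank_iff.1 hlt
  have hle := hmin _ hD'
  rw [degree_sub, degree_single] at hle
  linarith

lemma HasRankAtLeast.gonality_le_degree (hD : G.HasRankAtLeast D k) (hk : 0 ≤ k) :
    G.gonality k ≤ degree D := by
  obtain ⟨_, ⟨D₀, hD₀, rfl⟩, hmin⟩ := Int.exists_least_of_bdd
    (P := fun d => ∃ D', G.HasRankAtLeast D' k ∧ degree D' = d)
    ⟨0, by rintro _ ⟨D', hD', rfl⟩; exact hk.trans (hD'.le_degree hk)⟩ ⟨_, D, hD, rfl⟩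
  have hrank : G.rank D₀ = k := rank_eq_of_degree_minimal hD₀ fun D' hD' => hmin _ ⟨D', hD', rfl⟩
  have hbdd : BddBelow {d | ∃ D', G.rank D' = k ∧ degree D' = d} :=
    ⟨k, by rintro _ ⟨D', hD', rfl⟩; exact le_degree_of_rank_eq hk hD'⟩
  exact (csInf_le hbdd ⟨D₀, hrank, rfl⟩).trans (hmin _ ⟨D, hD, rfl⟩)

end Nonempty

/-- The number of edges from `w` to vertices outside `U`. For `w ∈ U` this is what `w` loses when
every vertex of `U` is fired once. It is an integer so that it compares with divisors. -/
def outdegree (G : Multigraph V) (U : Finset V) (w : V) : ℤ := ∑ u ∈ Uᶜ, (G.mult w u : ℤ)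

lemma laplacian_indicator_of_mem (G : Multigraph V) (hw : w ∈ U) :
    G.laplacian (Set.indicator U 1) w = G.outdegree U w := by
  rw [laplacian, ← Finset.sum_add_sum_compl U]
  have hin : ∑ u ∈ U, (G.mult w u : ℤ) * (Set.indicator U 1 w - Set.indicator U 1 u) = 0 :=
    Finset.sum_eq_zero fun u hu => by simp [hw, hu]
  rw [hin, zero_add]
  exact Finset.sum_congr rfl fun u hu => by simp [hw, Finset.mem_compl.1 hu]

lemma laplacian_indicator_of_notMem (G : Multigraph V) (hw : w ∉ U) :
    G.laplacian (Set.indicator U 1) w = -∑ u ∈ U, (G.mult w u : ℤ) := by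
  rw [laplacian, ← Finset.sum_add_sum_compl U, ← Finset.sum_neg_distrib]
  have hout : ∑ u ∈ Uᶜ, (G.mult w u : ℤ) * (Set.indicator U 1 w - Set.indicator U 1 u) = 0 :=
    Finset.sum_eq_zero fun u hu => by simp [hw, Finset.mem_compl.1 hu]
  rw [hout, add_zero]
  exact Finset.sum_congr rfl fun u hu => by simp [hw, hu]

lemma Connected.exists_adj_of_mem_of_notMem (hG : G.Connected) (hw : w ∈ U) (hv : v ∉ U) :
    ∃ u ∈ U, ∃ x ∉ U, G.Adj u x := by
  by_contra! hclosed
  have hreach : ∀ y, Relation.ReflTransGen G.Adj w y → y ∈ U := fun y hy => by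
    induction hy with
    | refl => exact hw
    | tail _ hadj hmem => exact by_contra fun hy => hclosed _ hmem _ hy hadj
  exact hv (hreach v (hG.2 w v))

lemma effective_fire_of_outdegree_le_one (hU : ∀ w ∈ U, G.outdegree U w ≤ 1)
    (hu : u ∈ U) (hx : x ∉ U) (hux : G.Adj u x) :
    Effective (1 - Pi.single x 1 - Pi.single x 1 - G.laplacian (Set.indicator U 1)) := by
  intro w
  by_cases hw : w ∈ U
  · have hwx : w ≠ x := ne_of_mem_of_not_mem hw hx
    simpa [laplacian_indicator_of_mem G hw, hwx] using hU w hw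
  rcases eq_or_ne w x with rfl | hwx
  · have received : (1 : ℤ) ≤ ∑ y ∈ U, (G.mult w y : ℤ) := calc
      (1 : ℤ) ≤ G.mult w u := by rw [G.symm w u]; exact_mod_cast hux
      _ ≤ ∑ y ∈ U, (G.mult w y : ℤ) :=
        Finset.single_le_sum (f := fun y => (G.mult w y : ℤ)) (fun _ _ => Int.natCast_nonneg _) hu
    simpa [laplacian_indicator_of_notMem G hw] using received
  · have received : 0 ≤ ∑ y ∈ U, (G.mult w y : ℤ) :=
      Finset.sum_nonneg fun _ _ => Int.natCast_nonneg _
    simp only [Pi.sub_apply, Pi.one_apply, Pi.single_eq_of_ne hwx,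
      laplacian_indicator_of_notMem G hw]
    linarith

lemma hasRankAtLeast_one_of_outdegree_le_one (hU : ∀ w ∈ U, G.outdegree U w ≤ 1)
    (hu : u ∈ U) (hx : x ∉ U) (hux : G.Adj u x) :
    G.HasRankAtLeast (1 - Pi.single x 1) 1 := by
  refine hasRankAtLeast_one fun y => ?_
  rcases eq_or_ne y x with rfl | hyx
  · exact winnable_of_effective_sub_laplacian _ (effective_fire_of_outdegree_le_one hU hu hx hux)
  · have one_sub_effective : Effective (1 - Pi.single x 1 : V → ℤ) :=
      Effective.sub_single (fun _ => zero_le_one) le_rfl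
    exact (one_sub_effective.sub_single (by simp [hyx])).winnable

lemma Connected.exists_one_lt_outdegree (hG : G.Connected)
    (hgon : (Fintype.card V : ℤ) ≤ G.gonality 1) (hw : w ∈ U) (hv : v ∉ U) :
    ∃ u ∈ U, 1 < G.outdegree U u := by
  by_contra! hU
  obtain ⟨u, hu, x, hx, hux⟩ := hG.exists_adj_of_mem_of_notMem hw hv
  have : Nonempty V := hG.1
  have hle : G.gonality 1 ≤ degree (1 - Pi.single x 1) :=
    (hasRankAtLeast_one_of_outdegree_le_one hU hu hx hux).gonality_le_degree zero_le_one
  rw [degree_sub, degree_one, degree_single] at hle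
  linarith

end Multigraph

/-- If the first gonality of `H` equals the number of vertices, `v` is a
vertex and `E` is an effective divisor with at most one chip on every vertex other than
`v`, then `E` is `v`-reduced. -/
theorem stmt9 (H : Multigraph V) (hH : H.Connected)
    (hgon : H.gonality 1 = (Fintype.card V : ℤ))
    (v : V) (E : V → ℤ) (hE : Multigraph.Effective E)
    (hE1 : ∀ w, w ≠ v → E w ≤ 1) :
    H.Reduced v E := by
  refine ⟨fun w _ => hE w, fun U ⟨a, ha⟩ hv => ?_⟩
  obtain ⟨w, hw, hout⟩ := hH.exists_one_lt_outdegree hgon.ge ha hv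
  have hEw : E w ≤ 1 := hE1 w (ne_of_mem_of_not_mem hw hv)
  exact ⟨w, hw, sub_neg.2 (hEw.trans_lt hout)⟩
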